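/- Let p₋₂, p₋₂', p₋₁, p₋₁', p₀, p₀', q₋₁, q₋₁', q₀, q₀' be complex numbers with p₋₂ ≠ 0, p₋₂' ≠ 0, q₋₁ ≠ 0, q₋₁' ≠ 0, and let a, a', b, b' : ℕ → ℂ satisfy a_{n+1} = p₋₂·n² + p₋₁·n + p₀ + O(n^{−1}), a'_n = p₋₂'·n² + p₋₁'·n + p₀' + O(n^{−1}), b_{n+1} = q₋₁·n + q₀ + O(n^{−1}), b'_n = q₋₁'·n + q₀' + O(n^{−1}) (the class D̃₂₁). Let u : ℕ → ℂ satisfy, for all n ≥ 1, b_{n+1} + u_{n+1} ≠ 0, a_{n+1} + b'_n·b_{n+1} + b'_n·u_{n+1} ≠ 0, and the tail relation u_n = a'_n/(b'_n + a_{n+1}/(b_{n+1} + u_{n+1})); suppose there are complex τ₋₂, τ₀, τ₂ with q₋₁'·τ₋₂² + (p₋₂ − p₋₂' + q₋₁'·q₋₁)·τ₋₂ − p₋₂'·q₋₁ = 0, (p₋₂ + q₋₁·q₋₁' + q₋₁'·τ₋₂)² ≠ p₋₂·p₋₂', and u_n = τ₋₂·n + τ₀ + τ₂·n^{−1} + O(n^{−2}).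 Let m ≥ 2 be an integer, c, d ∈ ℂ, and let u' : ℕ → ℂ satisfy a_{n+1} + b'_n·b_{n+1} + b'_n·u'_{n+1} ≠ 0 for all n ≥ 1 and u'_n − u_n = c·n^{−m/2} + d·n^{−m/2−1} + O(n^{−m/2−2}). Define u⁺_n := a'_n/(b'_n + a_{n+1}/(b_{n+1} + u'_{n+1})), ψ'_n := a'_n·a_{n+1}/(a_{n+1} + b'_n·b_{n+1} + b'_n·u'_{n+1})², and φ'_n := 1 + m/(2n). Then there exists N such that φ'_n − ψ'_n ≠ 0 for all n ≥ N, and the sequence u''_n := (φ'_n·u⁺_n − ψ'_n·u'_n)/(φ'_n − ψ'_n) satisfies u''_n − u_n = O(n^{−m/2−2}) as n → ∞. -/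

import Mathlib

open Asymptotics Filter

/-- `n^s` as a complex number, for `n : ℕ` and a real exponent `s`. -/
noncomputable def rpowC (s : ℝ) (n : ℕ) : ℂ := (((n : ℝ) ^ s : ℝ) : ℂ)

open Topology

/-- Two-sided second-order Bernoulli bound for a negative exponent. -/
theorem abs_rpow_neg_one_add_sub_le {t x : ℝ} (ht : 1 ≤ t) (hx : 0 ≤ x) :
    |(1 + x) ^ (-t) - 1 + t * x| ≤ t ^ 2 * x ^ 2 := by
  have h1 : 1 + t * x ≤ (1 + x) ^ t := one_add_mul_self_le_rpow_one_add (by linarith) ht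
  have hlow : 1 + (-t) * x ≤ (1 + x) ^ (-t) := by
    rw [Real.rpow_def_of_pos (by linarith)]
    have h2 := Real.log_le_sub_one_of_pos (show 0 < 1 + x by linarith)
    have h3 := Real.add_one_le_exp (Real.log (1 + x) * -t)
    nlinarith
  have htx : 0 ≤ t * x := by positivity
  have hup : (1 + x) ^ (-t) ≤ 1 - t * x + t ^ 2 * x ^ 2 := by
    rw [Real.rpow_neg (by linarith)]
    refine (inv_anti₀ (by linarith) h1).trans ?_
    rw [inv_le_iff_one_le_mul₀ (by linarith)]
    nlinarith [pow_nonneg htx 3]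
  rw [abs_le]
  constructor <;> nlinarith [sq_nonneg (t * x)]

/-- First-order expansion of `(n + 1) ^ (-t)` in powers of `n`. -/
theorem rpowC_succ_expansion {t : ℝ} (ht : 1 ≤ t) :
    (fun n : ℕ => rpowC (-t) (n + 1) - rpowC (-t) n + t * rpowC (-t - 1) n)
      =O[atTop] fun n : ℕ => (n : ℝ) ^ (-t - 2) := by
  refine IsBigO.of_bound (t ^ 2) ?_
  filter_upwards [eventually_ge_atTop 1] with n hn
  have hn0 : (0 : ℝ) < n := by exact_mod_cast hn
  have hsplit : ((n : ℝ) + 1) ^ (-t) = (n : ℝ) ^ (-t) * (1 + (n : ℝ)⁻¹) ^ (-t) := by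
    rw [← Real.mul_rpow hn0.le (by positivity)]
    congr 1
    field_simp
  have h1 : (n : ℝ) ^ (-t - 1) = (n : ℝ) ^ (-t) * (n : ℝ)⁻¹ := by
    rw [Real.rpow_sub_one hn0.ne', div_eq_mul_inv]
  have h2 : (n : ℝ) ^ (-t - 2) = (n : ℝ) ^ (-t) * (n : ℝ)⁻¹ ^ 2 := by
    rw [Real.rpow_sub hn0, Real.rpow_two, div_eq_mul_inv, inv_pow]
  have hpos : 0 < (n : ℝ) ^ (-t) := Real.rpow_pos_of_pos hn0 _
  have key : rpowC (-t) (n + 1) - rpowC (-t) n + t * rpowC (-t - 1) n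
      = (((n : ℝ) ^ (-t) * ((1 + (n : ℝ)⁻¹) ^ (-t) - 1 + t * (n : ℝ)⁻¹) : ℝ) : ℂ) := by
    simp only [rpowC, Nat.cast_add, Nat.cast_one, hsplit, h1]
    push_cast
    ring
  rw [key, Complex.norm_real, norm_mul, Real.norm_of_nonneg hpos.le, h2, norm_mul,
    Real.norm_of_nonneg hpos.le, Real.norm_of_nonneg (by positivity : 0 ≤ (n : ℝ)⁻¹ ^ 2)]
  calc _ ≤ (n : ℝ) ^ (-t) * (t ^ 2 * (n : ℝ)⁻¹ ^ 2) := by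
        gcongr
        exact abs_rpow_neg_one_add_sub_le ht (by positivity)
    _ = _ := by ring

theorem natCast_rpow_isBigO_of_le {s t : ℝ} (h : s ≤ t) :
    (fun n : ℕ => (n : ℝ) ^ s) =O[atTop] fun n : ℕ => (n : ℝ) ^ t := by
  refine IsBigO.of_bound 1 ?_
  filter_upwards [eventually_ge_atTop 1] with n hn
  have hn1 : (1 : ℝ) ≤ n := by exact_mod_cast hn
  rw [one_mul, Real.norm_of_nonneg (by positivity), Real.norm_of_nonneg (by positivity)]
  exact Real.rpow_le_rpow_of_exponent_le hn1 h

theorem isBigO_succ_of_isBigO_rpow {f : ℕ → ℂ} {t : ℝ} (ht : t ≤ 0)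
    (hf : f =O[atTop] fun n : ℕ => (n : ℝ) ^ t) :
    (fun n => f (n + 1)) =O[atTop] fun n : ℕ => (n : ℝ) ^ t := by
  refine (hf.comp_tendsto (tendsto_add_atTop_nat 1)).trans (IsBigO.of_bound 1 ?_)
  filter_upwards [eventually_ge_atTop 1] with n hn
  have hn1 : (0 : ℝ) < n := by exact_mod_cast hn
  simp only [Function.comp]
  rw [one_mul, Real.norm_of_nonneg (by positivity), Real.norm_of_nonneg (by positivity)]
  exact Real.rpow_le_rpow_of_nonpos hn1 (by push_cast; linarith) ht

theorem rpowC_isBigO (t : ℝ) :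
    rpowC t =O[atTop] fun n : ℕ => (n : ℝ) ^ t :=
  IsBigO.of_norm_left (by simpa [rpowC] using (isBigO_refl _ _).norm_left)

theorem natCast_inv_isBigO :
    (fun n : ℕ => (n : ℂ)⁻¹) =O[atTop] fun n : ℕ => (n : ℝ) ^ (-1 : ℝ) :=
  IsBigO.of_norm_left (by simpa [Real.rpow_neg_one] using (isBigO_refl _ _))

/-- Products of powers of `n` add up their exponents. -/
theorem isBigO_mul_natCast_rpow {f g : ℕ → ℂ} {s t r : ℝ} (h : s + t = r)
    (hf : f =O[atTop] fun n : ℕ => (n : ℝ) ^ s) (hg : g =O[atTop] fun n : ℕ => (n : ℝ) ^ t) :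
    (fun n => f n * g n) =O[atTop] fun n : ℕ => (n : ℝ) ^ r := by
  refine (hf.mul hg).congr' EventuallyEq.rfl ?_
  filter_upwards [eventually_ge_atTop 1] with n hn
  rw [← h, Real.rpow_add (by exact_mod_cast hn)]

theorem natCast_rpow_tendsto_zero {t : ℝ} (ht : t < 0) :
    Tendsto (fun n : ℕ => (n : ℝ) ^ t) atTop (𝓝 0) := by
  have := (tendsto_rpow_neg_atTop (neg_pos.2 ht)).comp
    (tendsto_natCast_atTop_atTop (R := ℝ))
  simpa [Function.comp_def] using this

theorem tendsto_div_of_sub_linear {f : ℕ → ℂ} {q r : ℂ}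
    (hf : Tendsto (fun n : ℕ => f n - (q * n + r)) atTop (𝓝 0)) :
    Tendsto (fun n : ℕ => f n / n) atTop (𝓝 q) := by
  have hi : Tendsto (fun n : ℕ => (n : ℂ)⁻¹) atTop (𝓝 0) := tendsto_inv_atTop_nhds_zero_nat
  have h := ((hf.mul hi).add (hi.const_mul r)).add_const q
  simp only [mul_zero, add_zero, zero_add] at h
  refine h.congr' ?_
  filter_upwards [eventually_ne_atTop 0] with n hn
  have : (n : ℂ) ≠ 0 := by exact_mod_cast hn
  field_simp
  ring

theorem tendsto_div_sq_of_sub_quadratic {f : ℕ → ℂ} {p q r : ℂ}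
    (hf : Tendsto (fun n : ℕ => f n - (p * n ^ 2 + q * n + r)) atTop (𝓝 0)) :
    Tendsto (fun n : ℕ => f n / n ^ 2) atTop (𝓝 p) := by
  have hi : Tendsto (fun n : ℕ => (n : ℂ)⁻¹) atTop (𝓝 0) := tendsto_inv_atTop_nhds_zero_nat
  have h := (((hf.add_const r).mul (hi.pow 2)).add (hi.const_mul q)).add_const p
  norm_num at h
  refine h.congr' ?_
  filter_upwards [eventually_ne_atTop 0] with n hn
  have : (n : ℂ) ≠ 0 := by exact_mod_cast hn
  field_simp
  ring

/-- If `e` has a two-term expansion starting at `n ^ (-s)`, then `1 + s / n` compensates the shift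
`n ↦ n + 1` up to an error of relative order `n ^ (-2)`. -/
theorem isBigO_one_add_div_mul_succ_sub {s : ℝ} (hs : 1 ≤ s) {c d : ℂ} {e : ℕ → ℂ}
    (he : (fun n : ℕ => e n - (c * rpowC (-s) n + d * rpowC (-s - 1) n))
      =O[atTop] fun n : ℕ => (n : ℝ) ^ (-s - 2)) :
    (fun n : ℕ => (1 + s * (n : ℂ)⁻¹) * e (n + 1) - e n)
      =O[atTop] fun n : ℕ => (n : ℝ) ^ (-s - 2) := by
  have hφ : (fun n : ℕ => 1 + (s : ℂ) * (n : ℂ)⁻¹) =O[atTop] fun n : ℕ => (n : ℝ) ^ (0 : ℝ) := by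
    have h : Tendsto (fun n : ℕ => 1 + (s : ℂ) * (n : ℂ)⁻¹) atTop (𝓝 (1 + s * 0)) :=
      (tendsto_inv_atTop_nhds_zero_nat.const_mul _).const_add _
    simpa using h.isBigO_one ℝ
  have hR := isBigO_succ_of_isBigO_rpow (by linarith) he
  have hc := rpowC_succ_expansion hs
  have hd := rpowC_succ_expansion (show 1 ≤ s + 1 by linarith)
  rw [show -(s + 1) = -s - 1 by ring] at hd
  have hd' := hd.trans (natCast_rpow_isBigO_of_le (show -s - 1 - 2 ≤ -s - 2 by linarith))
  have h1 := isBigO_mul_natCast_rpow (zero_add _) hφ hR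
  have h2 := (isBigO_mul_natCast_rpow (zero_add _) hφ hc).const_mul_left c
  have h3 := (isBigO_mul_natCast_rpow (zero_add _) hφ hd').const_mul_left d
  have h4 : (fun n : ℕ => (n : ℂ)⁻¹ * rpowC (-s - 1) n)
      =O[atTop] fun n : ℕ => (n : ℝ) ^ (-s - 2) :=
    isBigO_mul_natCast_rpow (by ring) natCast_inv_isBigO (rpowC_isBigO _)
  have h5 : (fun n : ℕ => (1 + s * (n : ℂ)⁻¹) * rpowC (-s - 1 - 1) n)
      =O[atTop] fun n : ℕ => (n : ℝ) ^ (-s - 2) :=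
    isBigO_mul_natCast_rpow (by ring) hφ (rpowC_isBigO _)
  refine ((((h1.add h2).add h3).sub he).add (((h4.const_mul_left (d * s - c * s ^ 2)).sub
    (h5.const_mul_left (d * (s + 1)))))).congr' ?_ EventuallyEq.rfl
  filter_upwards [eventually_ne_atTop 0] with n hn
  have hn' : (n : ℂ) ≠ 0 := by exact_mod_cast hn
  have hp : rpowC (-s - 1) n = rpowC (-s) n * (n : ℂ)⁻¹ := by
    simp only [rpowC, Real.rpow_sub_one (show (n : ℝ) ≠ 0 by exact_mod_cast hn)]
    push_cast
    rw [div_eq_mul_inv]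
  rw [hp]
  push_cast
  ring

/-- The two tails computed from the approximations `v` and `w` differ by `a' a (w - v)` over the
product of the denominators, so the accelerated combination has the displayed error. -/
theorem accelerated_sub_eq {a a' b b' v w x y φ : ℂ} (hv : b + v ≠ 0) (hw : b + w ≠ 0)
    (hDv : a + b' * b + b' * v ≠ 0) (hDw : a + b' * b + b' * w ≠ 0)
    (hx : x = a' / (b' + a / (b + v)))
    (hφ : φ - a' * a / (a + b' * b + b' * w) ^ 2 ≠ 0) :
    (φ * (a' / (b' + a / (b + w))) - (a' * a / (a + b' * b + b' * w) ^ 2) * y)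
        / (φ - a' * a / (a + b' * b + b' * w) ^ 2) - x
      = (a' * a / (a + b' * b + b' * w) ^ 2 / (φ - a' * a / (a + b' * b + b' * w) ^ 2))
        * ((φ * (w - v) - (y - x))
          + φ * ((w - v) * ((b' / (a + b' * b + b' * v)) * (w - v)))) := by
  have tail : ∀ z, b + z ≠ 0 → a' / (b' + a / (b + z)) = a' * (b + z) / (a + b' * b + b' * z) := by
    intro z hz
    rw [show b' + a / (b + z) = (a + b' * b + b' * z) / (b + z) by field_simp; ring,
      div_div_eq_mul_div]
  rw [hx, tail v hv, tail w hw]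
  generalize hV : a + b' * b + b' * v = V at *
  generalize hW : a + b' * b + b' * w = W at *
  have hd : a' * (b + w) / W - a' * (b + v) / V
      = a' * a / W ^ 2 * ((w - v) + (w - v) * (b' / V * (w - v))) := by
    field_simp
    rw [← hV, ← hW]
    ring
  rw [div_sub' hφ, div_mul_eq_mul_div (a' * a / W ^ 2)]
  congr 1
  linear_combination φ * hd

/-- The convergence-acceleration step for class D̃₂₁ (θ = 2): from tail
approximations `u'` of order `m/2` the combination
`u'' = (φ' u⁺ − ψ' u')/(φ' − ψ')` gives approximations of order `m/2 + 2`. -/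
theorem stmt19 (pm2 pm2' pm1 pm1' p₀ p₀' qm1 qm1' q₀ q₀' : ℂ)
    (hpm2 : pm2 ≠ 0) (hpm2' : pm2' ≠ 0) (hqm1 : qm1 ≠ 0) (hqm1' : qm1' ≠ 0)
    (a a' b b' : ℕ → ℂ)
    (ha : (fun n : ℕ => a (n + 1) - (pm2 * n ^ 2 + pm1 * n + p₀))
      =O[atTop] fun n : ℕ => (n : ℝ) ^ (-(1 : ℝ)))
    (ha' : (fun n : ℕ => a' n - (pm2' * n ^ 2 + pm1' * n + p₀'))
      =O[atTop] fun n : ℕ => (n : ℝ) ^ (-(1 : ℝ)))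
    (hb : (fun n : ℕ => b (n + 1) - (qm1 * n + q₀))
      =O[atTop] fun n : ℕ => (n : ℝ) ^ (-(1 : ℝ)))
    (hb' : (fun n : ℕ => b' n - (qm1' * n + q₀'))
      =O[atTop] fun n : ℕ => (n : ℝ) ^ (-(1 : ℝ)))
    (u : ℕ → ℂ)
    (hne₁ : ∀ n : ℕ, 1 ≤ n → b (n + 1) + u (n + 1) ≠ 0)
    (hne₂ : ∀ n : ℕ, 1 ≤ n → a (n + 1) + b' n * b (n + 1) + b' n * u (n + 1) ≠ 0)
    (htail : ∀ n : ℕ, 1 ≤ n →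
      u n = a' n / (b' n + a (n + 1) / (b (n + 1) + u (n + 1))))
    (τm2 τ0 τ2 : ℂ)
    (hquad : qm1' * τm2 ^ 2 + (pm2 - pm2' + qm1' * qm1) * τm2 - pm2' * qm1 = 0)
    (hz : (pm2 + qm1 * qm1' + qm1' * τm2) ^ 2 ≠ pm2 * pm2')
    (hu : (fun n : ℕ => u n - (τm2 * n + τ0 + τ2 * rpowC (-1) n))
      =O[atTop] fun n : ℕ => (n : ℝ) ^ (-(2 : ℝ)))
    (m : ℤ) (hm : 2 ≤ m) (c d : ℂ) (u' : ℕ → ℂ)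
    (hne₃ : ∀ n : ℕ, 1 ≤ n →
      a (n + 1) + b' n * b (n + 1) + b' n * u' (n + 1) ≠ 0)
    (hu' : (fun n : ℕ => u' n - u n
        - (c * rpowC (-(m : ℝ) / 2) n + d * rpowC (-(m : ℝ) / 2 - 1) n))
      =O[atTop] fun n : ℕ => (n : ℝ) ^ (-(m : ℝ) / 2 - 2)) :
    (∃ N : ℕ, ∀ n : ℕ, N ≤ n →
        (1 + (m : ℂ) / (2 * n))
          - a' n * a (n + 1)
              / (a (n + 1) + b' n * b (n + 1) + b' n * u' (n + 1)) ^ 2 ≠ 0) ∧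
      (fun n : ℕ =>
          ((1 + (m : ℂ) / (2 * n))
              * (a' n / (b' n + a (n + 1) / (b (n + 1) + u' (n + 1))))
            - (a' n * a (n + 1)
                / (a (n + 1) + b' n * b (n + 1) + b' n * u' (n + 1)) ^ 2)
              * u' n)
          / ((1 + (m : ℂ) / (2 * n))
              - a' n * a (n + 1)
                / (a (n + 1) + b' n * b (n + 1) + b' n * u' (n + 1)) ^ 2)
          - u n)
        =O[atTop] fun n : ℕ => (n : ℝ) ^ (-(m : ℝ) / 2 - 2) := by
  obtain ⟨s, hs⟩ : ∃ s : ℝ, s = (m : ℝ) / 2 := ⟨_, rfl⟩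
  have hs1 : 1 ≤ s := by
    have : (2 : ℝ) ≤ m := by exact_mod_cast hm
    linarith
  have hms : -(m : ℝ) / 2 = -s := by rw [hs]; ring
  have hφs : ∀ n : ℕ, 1 + (m : ℂ) / (2 * n) = 1 + (s : ℂ) * (n : ℂ)⁻¹ := by
    intro n
    rw [hs]
    push_cast
    ring
  rw [hms] at hu' ⊢
  simp only [hφs]
  have hτq : qm1 + τm2 ≠ 0 := by
    intro h
    obtain rfl : τm2 = -qm1 := by linear_combination h
    exact mul_ne_zero hpm2 hqm1 (by linear_combination -hquad)
  have hΔ : pm2 + qm1' * (qm1 + τm2) ≠ 0 := by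
    intro h
    exact mul_ne_zero hpm2' hτq (by linear_combination τm2 * h - hquad)
  have hi : Tendsto (fun n : ℕ => (n : ℂ)⁻¹) atTop (𝓝 0) := tendsto_inv_atTop_nhds_zero_nat
  have hlim1 := natCast_rpow_tendsto_zero (show (-1 : ℝ) < 0 by norm_num)
  -- The approximation error and its decay.
  have heO : (fun n : ℕ => u' n - u n) =O[atTop] fun n : ℕ => (n : ℝ) ^ (-s) := by
    have h := ((hu'.trans (natCast_rpow_isBigO_of_le (show -s - 2 ≤ -s by linarith))).add
      ((rpowC_isBigO (-s)).const_mul_left c)).add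
      (((rpowC_isBigO (-s - 1)).trans
        (natCast_rpow_isBigO_of_le (show -s - 1 ≤ -s by linarith))).const_mul_left d)
    exact h.congr_left fun n => by ring
  have heO1 := isBigO_succ_of_isBigO_rpow (by linarith) heO
  have heO1' := heO1.trans (natCast_rpow_isBigO_of_le (show -s ≤ -1 by linarith))
  have he0 := heO1'.trans_tendsto hlim1
  -- Leading behaviour of all the sequences involved.
  have la := tendsto_div_sq_of_sub_quadratic (ha.trans_tendsto hlim1)
  have la' := tendsto_div_sq_of_sub_quadratic (ha'.trans_tendsto hlim1)
  have lb := tendsto_div_of_sub_linear (hb.trans_tendsto hlim1)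
  have lb' := tendsto_div_of_sub_linear (hb'.trans_tendsto hlim1)
  have lu : Tendsto (fun n : ℕ => u (n + 1) / n) atTop (𝓝 τm2) := by
    have h1 := hu.trans_tendsto (natCast_rpow_tendsto_zero (show (-2 : ℝ) < 0 by norm_num))
    have h2 := (((rpowC_isBigO (-1)).trans_tendsto hlim1).const_mul τ2).add h1
    simp only [mul_zero, add_zero] at h2
    have h3 := h2.comp (tendsto_add_atTop_nat 1)
    refine tendsto_div_of_sub_linear (r := τm2 + τ0) (h3.congr fun n => ?_)
    simp only [Function.comp, Nat.cast_add, Nat.cast_one]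
    ring
  have lu' : Tendsto (fun n : ℕ => u' (n + 1) / n) atTop (𝓝 τm2) := by
    have h := lu.add (he0.mul hi)
    simp only [mul_zero, add_zero] at h
    exact h.congr fun n => by ring
  have denominator : ∀ v : ℕ → ℂ, Tendsto (fun n : ℕ => v (n + 1) / n) atTop (𝓝 τm2) →
      Tendsto (fun n : ℕ => (a (n + 1) + b' n * b (n + 1) + b' n * v (n + 1)) / n ^ 2) atTop
        (𝓝 (pm2 + qm1' * (qm1 + τm2))) := fun v hv =>
    (la.add (lb'.mul (lb.add hv))).congr fun n => by ring
  have lD := denominator u lu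
  have lD' := denominator u' lu'
  have hψ : Tendsto (fun n : ℕ => a' n * a (n + 1)
      / (a (n + 1) + b' n * b (n + 1) + b' n * u' (n + 1)) ^ 2) atTop
      (𝓝 (pm2' * pm2 / (pm2 + qm1' * (qm1 + τm2)) ^ 2)) := by
    refine ((la'.mul la).div (lD'.pow 2) (pow_ne_zero 2 hΔ)).congr' ?_
    filter_upwards [eventually_ne_atTop 0] with n hn
    have hn' : (n : ℂ) ≠ 0 := by exact_mod_cast hn
    rw [Pi.div_apply, div_mul_div_comm, div_pow, ← pow_mul, ← pow_add, div_div_div_cancel_right₀]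
    exact pow_ne_zero _ hn'
  have hφ : Tendsto (fun n : ℕ => 1 + (s : ℂ) * (n : ℂ)⁻¹) atTop (𝓝 1) := by
    simpa using (hi.const_mul (s : ℂ)).const_add 1
  have hlim : (1 : ℂ) - pm2' * pm2 / (pm2 + qm1' * (qm1 + τm2)) ^ 2 ≠ 0 := by
    rw [sub_ne_zero, ne_comm, Ne, div_eq_one_iff_eq (pow_ne_zero 2 hΔ)]
    intro h
    exact hz (by linear_combination -h)
  have hφψ := hφ.sub hψ
  have hne := hφψ.eventually_ne hlim
  refine ⟨eventually_atTop.1 hne, ?_⟩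
  have hw := (lb.add lu').eventually_ne hτq
  have hA := (hψ.div hφψ hlim).isBigO_one ℝ
  have hmain := isBigO_one_add_div_mul_succ_sub hs1 hu'
  have hφO := hφ.isBigO_one ℝ
  have hbD : (fun n : ℕ => b' n / (a (n + 1) + b' n * b (n + 1) + b' n * u (n + 1)))
      =O[atTop] fun n : ℕ => (n : ℝ) ^ (-1 : ℝ) := by
    have h : (fun n : ℕ => (b' n / n)
        / ((a (n + 1) + b' n * b (n + 1) + b' n * u (n + 1)) / n ^ 2))
        =O[atTop] fun n : ℕ => (n : ℝ) ^ (0 : ℝ) := by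
      simpa using (lb'.div lD hΔ).isBigO_one ℝ
    refine (isBigO_mul_natCast_rpow (zero_add _) h natCast_inv_isBigO).congr' ?_ EventuallyEq.rfl
    filter_upwards [eventually_ne_atTop 0] with n hn
    have hn' : (n : ℂ) ≠ 0 := by exact_mod_cast hn
    generalize a (n + 1) + b' n * b (n + 1) + b' n * u (n + 1) = D
    field_simp
  have hprod := hφO.mul (isBigO_mul_natCast_rpow (show -s + -2 = -s - 2 by ring) heO1
    (isBigO_mul_natCast_rpow (show (-1 : ℝ) + -1 = -2 by norm_num) hbD heO1'))
  have htotal := hA.mul (hmain.add (by simpa only [one_mul] using hprod))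
  simp only [one_mul] at htotal
  refine htotal.congr' ?_ EventuallyEq.rfl
  filter_upwards [hne, hw, eventually_ge_atTop 1] with n hn hwn hn1
  refine (accelerated_sub_eq (hne₁ n hn1) ?_ (hne₂ n hn1) (hne₃ n hn1) (htail n hn1) hn).symm
  intro h
  exact hwn (by rw [← add_div, h, zero_div])
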